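/- Let d ≥ 1. Let A₁, A₂ be symmetric positive definite real d×d matrices with A₁ ⪰ A₂ (i.e., A₁ − A₂ positive semidefinite), and let b₁, b₂ ≥ 0. Then the function h ↦ b₁ exp(−√(hᵀA₁h)) − b₂ exp(−√(hᵀA₂h)) is a stationary covariance function on ℝ^d if and only if b₁ ≥ b₂ (det A₁ / det A₂)^{1/2}. (This is the difference of geometrically anisotropic exponential, i.e., Matérn with shape parameter ν = 1/2, models.) -/

import Mathlib

open MeasureTheory
open scoped BigOperators RealInnerProductSpace

noncomputable section

/-- A function `C : ℝ^d → ℝ` is a stationary covariance function if it is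
positive semidefinite. -/
def IsStationaryCovariance (d : ℕ) (C : EuclideanSpace ℝ (Fin d) → ℝ) : Prop :=
  ∀ (n : ℕ) (x : Fin n → EuclideanSpace ℝ (Fin d)) (v : Fin n → ℝ),
    0 ≤ ∑ i, ∑ j, v i * v j * C (x i - x j)

/-- `φ : [0,∞) → ℝ` belongs to the class `Φ_d`. -/
def MemPhi (d : ℕ) (φ : ℝ → ℝ) : Prop :=
  ContinuousOn φ (Set.Ici 0) ∧ IsStationaryCovariance d (fun h => φ ‖h‖)

/-- `f` is a `d`-radial spectral density of `φ`. -/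
def IsRadialSpectralDensity (d : ℕ) (φ f : ℝ → ℝ) : Prop :=
  (∀ u : ℝ, 0 ≤ u → 0 ≤ f u) ∧
  MeasureTheory.Integrable (fun ω : EuclideanSpace ℝ (Fin d) => f ‖ω‖) ∧
  ∀ h : EuclideanSpace ℝ (Fin d),
    (φ ‖h‖ : ℂ) = ∫ ω : EuclideanSpace ℝ (Fin d),
      Complex.exp (Complex.I * ((⟪h, ω⟫ : ℝ) : ℂ)) * ((f ‖ω‖ : ℝ) : ℂ)

/-- The quadratic form `hᵀ A h`. -/
def quadForm {d : ℕ} (A : Matrix (Fin d) (Fin d) ℝ) (h : EuclideanSpace ℝ (Fin d)) : ℝ :=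
  ∑ i, ∑ j, h i * A i j * h j


lemma subord_pos (c : ℝ) (hc : 0 < c) :
    ∫ x in Set.Ioi (0:ℝ), Real.exp (-(x - c / x) ^ 2) = Real.sqrt Real.pi / 2 := by
  set r : ℝ → ℝ := fun y => Real.sqrt (y ^ 2 + 4 * c) with hr
  have hpos : ∀ y : ℝ, 0 < y ^ 2 + 4 * c := fun y => by positivity
  have hrpos : ∀ y, 0 < r y := fun y => Real.sqrt_pos.2 (hpos y)
  have hrsq : ∀ y, r y ^ 2 = y ^ 2 + 4 * c := fun y => Real.sq_sqrt (hpos y).le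
  have hrgt : ∀ y, |y| < r y := fun y => by
    apply abs_lt_of_sq_lt_sq _ (hrpos y).le
    rw [hrsq]; linarith
  set φ : ℝ → ℝ := fun y => (y + r y) / 2 with hφ
  have hφpos : ∀ y, 0 < φ y := fun y => by
    have := (abs_lt.1 (hrgt y)).1
    simp only [hφ]; linarith
  have hinv : ∀ y, φ y - c / φ y = y := fun y => by
    have h := (hφpos y).ne'
    field_simp
    simp only [hφ]
    nlinarith [hrsq y]
  have hder : ∀ y, HasDerivAt φ ((1 + y / r y) / 2) y := fun y => by
    have h1 : HasDerivAt (fun y : ℝ => y ^ 2 + 4 * c) (2 * y) y := by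
      simpa using (hasDerivAt_pow 2 y).add_const (4 * c)
    have h2 := h1.sqrt (hpos y).ne'
    have h3 := ((hasDerivAt_id y).add h2).div_const 2
    convert! h3 using 1
    have := (hrpos y).ne'
    simp only [hr] at this ⊢
    field_simp
  have hinj : Function.Injective φ := fun a b hab => by rw [← hinv a, ← hinv b, hab]
  have himg : φ '' Set.univ = Set.Ioi 0 := by
    ext x
    simp only [Set.image_univ, Set.mem_range, Set.mem_Ioi]
    constructor
    · rintro ⟨y, rfl⟩; exact hφpos y
    · intro hx
      refine ⟨x - c / x, ?_⟩
      have : r (x - c / x) = x + c / x := by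
        simp only [hr]
        rw [show (x - c / x) ^ 2 + 4 * c = (x + c / x) ^ 2 by field_simp; ring]
        exact Real.sqrt_sq (by positivity)
      simp only [hφ, this]; ring
  have key := integral_image_eq_integral_abs_deriv_smul (s := Set.univ) MeasurableSet.univ
    (fun y _ => (hder y).hasDerivWithinAt) hinj.injOn (fun x => Real.exp (-(x - c / x) ^ 2))
  rw [himg] at key
  rw [key, Measure.restrict_univ]
  have hbd : ∀ y, |y / r y| ≤ 1 := fun y => by
    rw [abs_div, abs_of_pos (hrpos y), div_le_one (hrpos y)]; exact (hrgt y).le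
  have habs : ∀ y, |(1 + y / r y) / 2| = (1 + y / r y) / 2 := fun y => by
    apply abs_of_nonneg
    have := (abs_le.1 (hbd y)).1
    linarith
  simp only [hinv, habs, smul_eq_mul]
  have hg : Integrable (fun y : ℝ => Real.exp (-y ^ 2)) := by
    simpa using integrable_exp_neg_mul_sq (b := 1) one_pos
  have hrc : Continuous r := by simp only [hr]; fun_prop
  have hg2 : Integrable (fun y : ℝ => y / r y * Real.exp (-y ^ 2)) := by
    refine hg.bdd_mul (c := 1) ?_ (ae_of_all _ fun y => by rw [Real.norm_eq_abs]; exact hbd y)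
    exact (continuous_id.div hrc (fun y => (hrpos y).ne')).aestronglyMeasurable
  have hodd : ∫ y : ℝ, y / r y * Real.exp (-y ^ 2) = 0 := by
    have h := integral_neg_eq_self (fun y : ℝ => y / r y * Real.exp (-y ^ 2)) volume
    have h2 : ∀ y : ℝ, (-y) / r (-y) * Real.exp (-(-y) ^ 2) = -(y / r y * Real.exp (-y ^ 2)) := by
      intro y
      have : r (-y) = r y := by simp [hr]
      rw [this, neg_sq]; ring
    simp only [h2, integral_neg] at h
    linarith
  have : ∀ y : ℝ, (1 + y / r y) / 2 * Real.exp (-y ^ 2)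
      = 1 / 2 * Real.exp (-y ^ 2) + 1 / 2 * (y / r y * Real.exp (-y ^ 2)) := fun y => by ring
  simp only [this]
  rw [integral_add (hg.const_mul _) (hg2.const_mul _), integral_const_mul, integral_const_mul, hodd]
  have := integral_gaussian 1
  simp only [neg_mul, one_mul, div_one] at this
  rw [this]; ring

lemma subord (s : ℝ) (hs : 0 ≤ s) :
    Real.exp (-s) = 2 / Real.sqrt Real.pi *
      ∫ x in Set.Ioi (0:ℝ), Real.exp (-x ^ 2) * Real.exp (-(s ^ 2 / x ^ 2 / 4)) := by
  have hpi : Real.sqrt Real.pi ≠ 0 := (Real.sqrt_pos.2 Real.pi_pos).ne'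
  rcases hs.eq_or_lt with rfl | hs
  · have := integral_gaussian_Ioi 1
    simp only [neg_mul, one_mul, div_one] at this
    simp [this]
    field_simp
  · have h := subord_pos (s / 2) (by positivity)
    have h2 : ∫ x in Set.Ioi (0:ℝ), Real.exp (-x ^ 2) * Real.exp (-(s ^ 2 / x ^ 2 / 4))
        = ∫ x in Set.Ioi (0:ℝ), Real.exp (-s) * Real.exp (-(x - s / 2 / x) ^ 2) := by
      refine setIntegral_congr_fun measurableSet_Ioi fun x hx => ?_
      have hx : x ≠ 0 := (ne_of_gt hx)
      simp only [← Real.exp_add]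
      congr 1
      field_simp
      ring
    rw [h2, integral_const_mul, h]
    field_simp

lemma integral_comp_lin {E : Type*} [NormedAddCommGroup E] [InnerProductSpace ℝ E]
    [FiniteDimensional ℝ E] [MeasurableSpace E] [BorelSpace E]
    (T : E ≃L[ℝ] E) (f : E → ℝ) :
    ∫ x, f (T x) = |LinearMap.det (T : E →ₗ[ℝ] E)|⁻¹ * ∫ x, f x := by
  have hdet : LinearMap.det (T : E →ₗ[ℝ] E) ≠ 0 := T.toLinearEquiv.isUnit_det'.ne_zero
  have h := Measure.map_linearMap_addHaar_eq_smul_addHaar (volume : Measure E) hdet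
  have h1 : ∫ x, f (T x) = ∫ x, f x ∂(Measure.map (T : E →ₗ[ℝ] E) volume) :=
    (T.toHomeomorph.measurableEmbedding.integral_map f).symm
  rw [h1, h, integral_smul_measure, ENNReal.toReal_ofReal (abs_nonneg _), abs_inv, smul_eq_mul]

lemma integrable_comp_lin {E : Type*} [NormedAddCommGroup E] [InnerProductSpace ℝ E]
    [FiniteDimensional ℝ E] [MeasurableSpace E] [BorelSpace E]
    (T : E ≃L[ℝ] E) (f : E → ℝ) (hf : Integrable f) : Integrable (fun x => f (T x)) := by
  have hdet : LinearMap.det (T : E →ₗ[ℝ] E) ≠ 0 := T.toLinearEquiv.isUnit_det'.ne_zero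
  have h := Measure.map_linearMap_addHaar_eq_smul_addHaar (volume : Measure E) hdet
  refine (T.toHomeomorph.measurableEmbedding.integrable_map_iff (g := f) (μ := volume)).1 ?_
  change Integrable f (Measure.map (T : E →ₗ[ℝ] E) volume)
  rw [h]
  exact hf.smul_measure ENNReal.ofReal_ne_top

lemma gauss_integrable {d : ℕ} (t : ℝ) (ht : 0 < t) :
    Integrable (fun ω : EuclideanSpace ℝ (Fin d) => Real.exp (-(t * ‖ω‖ ^ 2))) := by
  have h := (GaussianFourier.integrable_cexp_neg_mul_sq_norm_add (V := EuclideanSpace ℝ (Fin d))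
    (b := (t : ℂ)) (by simpa using ht) 0 0).norm
  refine h.congr (ae_of_all _ fun ω => ?_)
  simp only [Complex.norm_exp]
  congr 1
  simp [← Complex.ofReal_pow]

lemma gauss_fourier {d : ℕ} : ∃ K : ℝ, 0 < K ∧ ∀ h : EuclideanSpace ℝ (Fin d),
    ∫ ω : EuclideanSpace ℝ (Fin d), Real.exp (-‖ω‖ ^ 2) * Real.cos ⟪ω, h⟫
      = K * Real.exp (-(‖h‖ ^ 2 / 4)) := by
  refine ⟨Real.pi ^ ((d : ℝ) / 2), by positivity, fun h => ?_⟩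
  have hi := (GaussianFourier.integrable_cexp_neg_mul_sq_norm_add (V := EuclideanSpace ℝ (Fin d))
    (b := 1) (by simp) Complex.I h)
  have he := (GaussianFourier.integral_cexp_neg_mul_sq_norm_add (V := EuclideanSpace ℝ (Fin d))
    (b := 1) (by simp) Complex.I h)
  have h1 := congrArg Complex.re he
  have h2 : (∫ v : EuclideanSpace ℝ (Fin d), Complex.exp (-1 * ‖v‖ ^ 2 + Complex.I * ⟪h, v⟫)).re
      = ∫ v : EuclideanSpace ℝ (Fin d),
        (Complex.exp (-1 * ‖v‖ ^ 2 + Complex.I * ⟪h, v⟫)).re := (integral_re hi).symm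
  rw [h2] at h1
  have h3 : ∀ v : EuclideanSpace ℝ (Fin d),
      (Complex.exp (-1 * ‖v‖ ^ 2 + Complex.I * ⟪h, v⟫)).re
      = Real.exp (-‖v‖ ^ 2) * Real.cos ⟪v, h⟫ := by
    intro v
    rw [Complex.exp_re, real_inner_comm]
    simp [← Complex.ofReal_pow]
  simp only [h3] at h1
  rw [h1]
  have h4 : ((Real.pi : ℂ) / 1) ^ ((Module.finrank ℝ (EuclideanSpace ℝ (Fin d)) : ℂ) / 2) *
      Complex.exp (Complex.I ^ 2 * ‖h‖ ^ 2 / (4 * 1))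
      = ((Real.pi ^ ((d : ℝ) / 2) * Real.exp (-(‖h‖ ^ 2 / 4)) : ℝ) : ℂ) := by
    rw [Complex.ofReal_mul, Complex.ofReal_cpow Real.pi_pos.le]
    push_cast
    simp [neg_div]
  rw [h4, Complex.ofReal_re]

lemma exists_factor {d : ℕ} (A : Matrix (Fin d) (Fin d) ℝ) (hA : A.PosDef) :
    ∃ T S : EuclideanSpace ℝ (Fin d) ≃L[ℝ] EuclideanSpace ℝ (Fin d),
      (∀ h, ‖T h‖ ^ 2 = quadForm A h) ∧ (∀ ω h, ⟪ω, T h⟫ = ⟪S ω, h⟫) ∧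
      |LinearMap.det (T : EuclideanSpace ℝ (Fin d) →ₗ[ℝ] EuclideanSpace ℝ (Fin d))|
        = Real.sqrt A.det ∧
      |LinearMap.det (S : EuclideanSpace ℝ (Fin d) →ₗ[ℝ] EuclideanSpace ℝ (Fin d))|
        = Real.sqrt A.det := by
  obtain ⟨M, hM⟩ : ∃ M : Matrix (Fin d) (Fin d) ℝ, A = M.transpose * M := by
    open scoped MatrixOrder in
    have := (CStarAlgebra.nonneg_iff_eq_star_mul_self (a := A)).1 hA.posSemidef.nonneg
    obtain ⟨M, hM⟩ := this
    exact ⟨M, by simpa [Matrix.star_eq_conjTranspose] using hM⟩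
  have hdet : A.det = M.det ^ 2 := by rw [hM, Matrix.det_mul, Matrix.det_transpose, sq]
  have hMdet : M.det ≠ 0 := fun h => by
    have := hA.det_pos; rw [hdet, h] at this; simp at this
  have d1 : LinearMap.det (Matrix.toEuclideanLin M) = M.det := LinearMap.det_toLpLin _ _
  have d2 : LinearMap.det (Matrix.toEuclideanLin M.transpose) = M.det := by
    rw [← Matrix.det_transpose]; exact LinearMap.det_toLpLin _ _
  have hadj : ∀ ω h : EuclideanSpace ℝ (Fin d),
      ⟪ω, Matrix.toEuclideanLin M h⟫ = ⟪Matrix.toEuclideanLin M.transpose ω, h⟫ := by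
    intro ω h
    simp only [PiLp.inner_apply, Matrix.toLpLin_apply, Matrix.mulVec, dotProduct, 
      RCLike.inner_apply, conj_trivial, Matrix.transpose_apply, Finset.sum_mul, Finset.mul_sum]
    rw [Finset.sum_comm]
    refine Finset.sum_congr rfl fun i _ => Finset.sum_congr rfl fun j _ => by ring
  refine ⟨(LinearEquiv.ofIsUnitDet (f := Matrix.toEuclideanLin M)
      (v := (EuclideanSpace.basisFun (Fin d) ℝ).toBasis)
      (v' := (EuclideanSpace.basisFun (Fin d) ℝ).toBasis) ?_).toContinuousLinearEquiv,
    (LinearEquiv.ofIsUnitDet (f := Matrix.toEuclideanLin M.transpose)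
      (v := (EuclideanSpace.basisFun (Fin d) ℝ).toBasis)
      (v' := (EuclideanSpace.basisFun (Fin d) ℝ).toBasis) ?_).toContinuousLinearEquiv,
    ?_, ?_, ?_, ?_⟩
  · rw [LinearMap.det_toMatrix, d1]; exact hMdet.isUnit
  · rw [LinearMap.det_toMatrix, d2]; exact hMdet.isUnit
  · intro h
    change ‖Matrix.toEuclideanLin M h‖ ^ 2 = _
    rw [← real_inner_self_eq_norm_sq, real_inner_comm, hadj]
    have : Matrix.toEuclideanLin M.transpose (Matrix.toEuclideanLin M h)
        = Matrix.toEuclideanLin A h := by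
      rw [hM]; simp [Matrix.toLpLin_apply]
    rw [this]
    simp only [PiLp.inner_apply, Matrix.toLpLin_apply, Matrix.mulVec, dotProduct, 
      RCLike.inner_apply, conj_trivial, quadForm, Finset.mul_sum]
    refine Finset.sum_congr rfl fun i _ => Finset.sum_congr rfl fun j _ => by ring
  · exact hadj
  · change |LinearMap.det (Matrix.toEuclideanLin M)| = _
    rw [d1, hdet, Real.sqrt_sq_eq_abs]
  · change |LinearMap.det (Matrix.toEuclideanLin M.transpose)| = _
    rw [d2, hdet, Real.sqrt_sq_eq_abs]

lemma cos_psd {d : ℕ} (η : EuclideanSpace ℝ (Fin d)) (n : ℕ)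
    (x : Fin n → EuclideanSpace ℝ (Fin d)) (v : Fin n → ℝ) :
    0 ≤ ∑ i, ∑ j, v i * v j * Real.cos ⟪η, x i - x j⟫ := by
  have : ∑ i, ∑ j, v i * v j * Real.cos ⟪η, x i - x j⟫
      = (∑ i, v i * Real.cos ⟪η, x i⟫) ^ 2 + (∑ i, v i * Real.sin ⟪η, x i⟫) ^ 2 := by
    rw [sq, sq, Finset.sum_mul_sum, Finset.sum_mul_sum, ← Finset.sum_add_distrib]
    refine Finset.sum_congr rfl fun i _ => ?_
    rw [← Finset.sum_add_distrib]
    refine Finset.sum_congr rfl fun j _ => ?_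
    rw [inner_sub_right, Real.cos_sub]; ring
  rw [this]; positivity

lemma gauss_rep {d : ℕ} (K : ℝ) (hK : ∀ h : EuclideanSpace ℝ (Fin d),
    ∫ ω : EuclideanSpace ℝ (Fin d), Real.exp (-‖ω‖ ^ 2) * Real.cos ⟪ω, h⟫
      = K * Real.exp (-(‖h‖ ^ 2 / 4)))
    (T S : EuclideanSpace ℝ (Fin d) ≃L[ℝ] EuclideanSpace ℝ (Fin d))
    (hTS : ∀ ω h, ⟪ω, T h⟫ = ⟪S ω, h⟫) (h : EuclideanSpace ℝ (Fin d)) :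
    K * Real.exp (-(‖T h‖ ^ 2 / 4)) =
      |LinearMap.det (S : EuclideanSpace ℝ (Fin d) →ₗ[ℝ] EuclideanSpace ℝ (Fin d))|⁻¹ *
      ∫ η : EuclideanSpace ℝ (Fin d), Real.exp (-‖S.symm η‖ ^ 2) * Real.cos ⟪η, h⟫ := by
  rw [← hK (T h), ← integral_comp_lin S (fun η => Real.exp (-‖S.symm η‖ ^ 2) * Real.cos ⟪η, h⟫)]
  simp [hTS]

lemma gauss_int {d : ℕ} 
    (S : EuclideanSpace ℝ (Fin d) ≃L[ℝ] EuclideanSpace ℝ (Fin d)) (h : EuclideanSpace ℝ (Fin d)) :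
    Integrable (fun η : EuclideanSpace ℝ (Fin d) =>
      Real.exp (-‖S.symm η‖ ^ 2) * Real.cos ⟪η, h⟫) := by
  have h1 := gauss_integrable (d := d) 1 one_pos
  simp only [one_mul] at h1
  have h2 := integrable_comp_lin S.symm _ h1
  refine h2.mul_bdd (c := 1) ?_ (ae_of_all _ fun η => ?_)
  · exact Continuous.aestronglyMeasurable (by fun_prop)
  · rw [Real.norm_eq_abs]; exact Real.abs_cos_le_one _

lemma dual_norm_le {d : ℕ}
    (T₁ S₁ T₂ S₂ : EuclideanSpace ℝ (Fin d) ≃L[ℝ] EuclideanSpace ℝ (Fin d))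
    (h₁ : ∀ ω h, ⟪ω, T₁ h⟫ = ⟪S₁ ω, h⟫) (h₂ : ∀ ω h, ⟪ω, T₂ h⟫ = ⟪S₂ ω, h⟫)
    (hle : ∀ h, ‖T₂ h‖ ≤ ‖T₁ h‖) (η : EuclideanSpace ℝ (Fin d)) :
    ‖S₁.symm η‖ ≤ ‖S₂.symm η‖ := by
  set a₁ := S₁.symm η with ha₁
  set a₂ := S₂.symm η with ha₂
  have e1 : S₁ a₁ = η := by simp [ha₁]
  have e2 : S₂ a₂ = η := by simp [ha₂]
  set x := T₁.symm a₁ with hx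
  have e3 : T₁ x = a₁ := by simp [hx]
  have : ‖a₁‖ * ‖a₁‖ ≤ ‖a₂‖ * ‖a₁‖ := calc
    ‖a₁‖ * ‖a₁‖ = ⟪a₁, T₁ x⟫ := by rw [e3, real_inner_self_eq_norm_mul_norm]
    _ = ⟪a₂, T₂ x⟫ := by rw [h₁, h₂, e1, e2]
    _ ≤ ‖a₂‖ * ‖T₂ x‖ := real_inner_le_norm _ _
    _ ≤ ‖a₂‖ * ‖T₁ x‖ := by gcongr; exact hle x
    _ = _ := by rw [e3]
  by_contra hcon
  push Not at hcon
  nlinarith [norm_nonneg a₂, norm_nonneg a₁]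

lemma gauss_diff {d : ℕ}
    (T₁ S₁ T₂ S₂ : EuclideanSpace ℝ (Fin d) ≃L[ℝ] EuclideanSpace ℝ (Fin d))
    (h₁ : ∀ ω h, ⟪ω, T₁ h⟫ = ⟪S₁ ω, h⟫) (h₂ : ∀ ω h, ⟪ω, T₂ h⟫ = ⟪S₂ ω, h⟫)
    (hle : ∀ h, ‖T₂ h‖ ≤ ‖T₁ h‖) (b₁ b₂ : ℝ) (hb₂ : 0 ≤ b₂)
    (hb : b₂ * |LinearMap.det (S₂ : EuclideanSpace ℝ (Fin d) →ₗ[ℝ] EuclideanSpace ℝ (Fin d))|⁻¹ ≤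
      b₁ * |LinearMap.det (S₁ : EuclideanSpace ℝ (Fin d) →ₗ[ℝ] EuclideanSpace ℝ (Fin d))|⁻¹) :
    IsStationaryCovariance d (fun h => b₁ * Real.exp (-(‖T₁ h‖ ^ 2 / 4)) -
      b₂ * Real.exp (-(‖T₂ h‖ ^ 2 / 4))) := by
  intro n x v
  obtain ⟨K, hKpos, hK⟩ := gauss_fourier (d := d)
  set D₁ := |LinearMap.det (S₁ : EuclideanSpace ℝ (Fin d) →ₗ[ℝ] EuclideanSpace ℝ (Fin d))|⁻¹
  set D₂ := |LinearMap.det (S₂ : EuclideanSpace ℝ (Fin d) →ₗ[ℝ] EuclideanSpace ℝ (Fin d))|⁻¹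
  have hD₂ : 0 ≤ D₂ := by positivity
  set w : EuclideanSpace ℝ (Fin d) → ℝ := fun η => b₁ * D₁ * Real.exp (-‖S₁.symm η‖ ^ 2) -
    b₂ * D₂ * Real.exp (-‖S₂.symm η‖ ^ 2) with hw
  have hw0 : ∀ η, 0 ≤ w η := by
    intro η
    have hn := dual_norm_le T₁ S₁ T₂ S₂ h₁ h₂ hle η
    have : Real.exp (-‖S₂.symm η‖ ^ 2) ≤ Real.exp (-‖S₁.symm η‖ ^ 2) := by
      apply Real.exp_le_exp.2
      apply neg_le_neg
      gcongr
    have h3 : b₂ * D₂ * Real.exp (-‖S₂.symm η‖ ^ 2) ≤ b₁ * D₁ * Real.exp (-‖S₁.symm η‖ ^ 2) :=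
      mul_le_mul hb this (Real.exp_pos _).le (le_trans (by positivity) hb)
    simp only [hw]; linarith
  have hwform : ∀ h η, w η * Real.cos ⟪η, h⟫ =
      b₁ * D₁ * (Real.exp (-‖S₁.symm η‖ ^ 2) * Real.cos ⟪η, h⟫) -
      b₂ * D₂ * (Real.exp (-‖S₂.symm η‖ ^ 2) * Real.cos ⟪η, h⟫) := fun h η => by
    simp only [hw]; ring
  have hwint : ∀ h, Integrable (fun η => w η * Real.cos ⟪η, h⟫) := fun h => by
    simp only [hwform]
    exact ((gauss_int S₁ h).const_mul _).sub ((gauss_int S₂ h).const_mul _)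
  have hrep : ∀ h, K * (b₁ * Real.exp (-(‖T₁ h‖ ^ 2 / 4)) - b₂ * Real.exp (-(‖T₂ h‖ ^ 2 / 4)))
      = ∫ η, w η * Real.cos ⟪η, h⟫ := fun h => by
    simp only [hwform]
    rw [integral_sub ((gauss_int S₁ h).const_mul _) ((gauss_int S₂ h).const_mul _),
      integral_const_mul, integral_const_mul]
    have r1 := gauss_rep K hK T₁ S₁ h₁ h
    have r2 := gauss_rep K hK T₂ S₂ h₂ h
    linear_combination b₁ * r1 - b₂ * r2
  refine nonneg_of_mul_nonneg_right (a := K) ?_ hKpos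
  have : K * ∑ i, ∑ j, v i * v j * (b₁ * Real.exp (-(‖T₁ (x i - x j)‖ ^ 2 / 4)) -
      b₂ * Real.exp (-(‖T₂ (x i - x j)‖ ^ 2 / 4)))
      = ∫ η, w η * ∑ i, ∑ j, v i * v j * Real.cos ⟪η, x i - x j⟫ := by
    have e : ∀ η, w η * ∑ i, ∑ j, v i * v j * Real.cos ⟪η, x i - x j⟫
        = ∑ i, ∑ j, v i * v j * (w η * Real.cos ⟪η, x i - x j⟫) := fun η => by
      simp only [Finset.mul_sum]
      refine Finset.sum_congr rfl fun i _ => Finset.sum_congr rfl fun j _ => by ring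
    simp only [e]
    rw [integral_finsetSum _ fun i _ => integrable_finsetSum _ fun j _ => (hwint _).const_mul _]
    rw [Finset.mul_sum]
    refine Finset.sum_congr rfl fun i _ => ?_
    rw [integral_finsetSum _ fun j _ => (hwint _).const_mul _, Finset.mul_sum]
    refine Finset.sum_congr rfl fun j _ => ?_
    rw [integral_const_mul, ← hrep]; ring
  rw [this]
  exact integral_nonneg fun η => mul_nonneg (hw0 η) (cos_psd η n x v)

lemma suff_part {d : ℕ}
    (T₁ S₁ T₂ S₂ : EuclideanSpace ℝ (Fin d) ≃L[ℝ] EuclideanSpace ℝ (Fin d))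
    (h₁ : ∀ ω h, ⟪ω, T₁ h⟫ = ⟪S₁ ω, h⟫) (h₂ : ∀ ω h, ⟪ω, T₂ h⟫ = ⟪S₂ ω, h⟫)
    (hle : ∀ h, ‖T₂ h‖ ≤ ‖T₁ h‖) (b₁ b₂ : ℝ) (hb₂ : 0 ≤ b₂)
    (hb : b₂ * |LinearMap.det (S₂ : EuclideanSpace ℝ (Fin d) →ₗ[ℝ] EuclideanSpace ℝ (Fin d))|⁻¹ ≤
      b₁ * |LinearMap.det (S₁ : EuclideanSpace ℝ (Fin d) →ₗ[ℝ] EuclideanSpace ℝ (Fin d))|⁻¹) :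
    IsStationaryCovariance d (fun h => b₁ * Real.exp (-‖T₁ h‖) - b₂ * Real.exp (-‖T₂ h‖)) := by
  intro n x v
  have hG := gauss_diff T₁ S₁ T₂ S₂ h₁ h₂ hle b₁ b₂ hb₂ hb
  have hg : Integrable (fun y : ℝ => Real.exp (-y ^ 2)) := by
    simpa using integrable_exp_neg_mul_sq (b := 1) one_pos
  have hIntg : ∀ s : ℝ, IntegrableOn (fun u : ℝ => Real.exp (-u ^ 2) *
      Real.exp (-(s ^ 2 / u ^ 2 / 4))) (Set.Ioi 0) := fun s => by
    refine hg.integrableOn.mul_bdd (c := 1) ?_ (ae_of_all _ fun η => ?_)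
    · exact Measurable.aestronglyMeasurable (by fun_prop)
    · rw [Real.norm_eq_abs, Real.abs_exp, Real.exp_le_one_iff]
      have : 0 ≤ s ^ 2 / η ^ 2 / 4 := by positivity
      linarith
  set F : EuclideanSpace ℝ (Fin d) → ℝ → ℝ := fun h u =>
    b₁ * (Real.exp (-u ^ 2) * Real.exp (-(‖T₁ h‖ ^ 2 / u ^ 2 / 4))) -
    b₂ * (Real.exp (-u ^ 2) * Real.exp (-(‖T₂ h‖ ^ 2 / u ^ 2 / 4))) with hF
  have hFint : ∀ h, IntegrableOn (F h) (Set.Ioi 0) := fun h =>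
    ((hIntg _).const_mul _).sub ((hIntg _).const_mul _)
  have hrep : ∀ h, b₁ * Real.exp (-‖T₁ h‖) - b₂ * Real.exp (-‖T₂ h‖) =
      2 / Real.sqrt Real.pi * ∫ u in Set.Ioi (0:ℝ), F h u := fun h => by
    simp only [hF]
    rw [integral_sub ((hIntg _).const_mul _) ((hIntg _).const_mul _),
      integral_const_mul, integral_const_mul, subord _ (norm_nonneg (T₁ h)),
      subord _ (norm_nonneg (T₂ h))]
    ring
  have : ∑ i, ∑ j, v i * v j * (b₁ * Real.exp (-‖T₁ (x i - x j)‖) -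
      b₂ * Real.exp (-‖T₂ (x i - x j)‖))
      = 2 / Real.sqrt Real.pi * ∫ u in Set.Ioi (0:ℝ), ∑ i, ∑ j, v i * v j * F (x i - x j) u := by
    rw [integral_finsetSum _ fun i _ => integrable_finsetSum _ fun j _ => (hFint _).const_mul _]
    rw [Finset.mul_sum]
    refine Finset.sum_congr rfl fun i _ => ?_
    rw [integral_finsetSum _ fun j _ => (hFint _).const_mul _, Finset.mul_sum]
    refine Finset.sum_congr rfl fun j _ => ?_
    rw [integral_const_mul, hrep]; ring
  rw [this]
  refine mul_nonneg (by positivity) (setIntegral_nonneg measurableSet_Ioi fun u hu => ?_)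
  have hu : 0 < u := hu
  have hq := hG n (fun i => u⁻¹ • x i) v
  have e : ∑ i, ∑ j, v i * v j * F (x i - x j) u = Real.exp (-u ^ 2) *
      ∑ i, ∑ j, v i * v j * (b₁ * Real.exp (-(‖T₁ (u⁻¹ • x i - u⁻¹ • x j)‖ ^ 2 / 4)) -
      b₂ * Real.exp (-(‖T₂ (u⁻¹ • x i - u⁻¹ • x j)‖ ^ 2 / 4))) := by
    simp only [Finset.mul_sum]
    refine Finset.sum_congr rfl fun i _ => Finset.sum_congr rfl fun j _ => ?_
    have n1 : ∀ T : EuclideanSpace ℝ (Fin d) ≃L[ℝ] EuclideanSpace ℝ (Fin d),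
        ‖T (u⁻¹ • x i - u⁻¹ • x j)‖ ^ 2 = ‖T (x i - x j)‖ ^ 2 / u ^ 2 := fun T => by
      rw [← smul_sub, map_smul, norm_smul, norm_inv, Real.norm_eq_abs, abs_of_pos hu]
      field_simp
    rw [n1, n1]; simp only [hF]; ring
  rw [e]
  exact mul_nonneg (Real.exp_pos _).le hq

lemma psd_prob {d : ℕ} (C : EuclideanSpace ℝ (Fin d) → ℝ) (hC : IsStationaryCovariance d C)
    (hcont : Continuous C) (B : ℝ) (hB : ∀ h, |C h| ≤ B)
    (μ : Measure (EuclideanSpace ℝ (Fin d))) [IsProbabilityMeasure μ] :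
    0 ≤ ∫ x, ∫ y, C (x - y) ∂μ ∂μ := by
  set J := ∫ x, ∫ y, C (x - y) ∂μ ∂μ with hJ
  have hprod : Integrable (fun p : EuclideanSpace ℝ (Fin d) × EuclideanSpace ℝ (Fin d) =>
      C (p.1 - p.2)) (μ.prod μ) :=
    Integrable.of_bound (Continuous.aestronglyMeasurable (by fun_prop)) B
      (ae_of_all _ fun p => hB _)
  have key : ∀ n : ℕ, 0 ≤ (n : ℝ) * C 0 + ((n : ℝ) * n - n) * J := by
    intro n
    set P := Measure.pi (fun _ : Fin n => μ) with hP
    have hIntg : ∀ i j : Fin n, Integrable (fun x : Fin n → EuclideanSpace ℝ (Fin d) =>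
        C (x i - x j)) P := fun i j =>
      Integrable.of_bound (Continuous.aestronglyMeasurable (by fun_prop)) B
        (ae_of_all _ fun p => hB _)
    have hval : ∀ i j : Fin n, ∫ x, C (x i - x j) ∂P = if i = j then C 0 else J := by
      intro i j
      split_ifs with hij
      · subst hij; simp
      · have hind : ProbabilityTheory.iIndepFun
            (fun (i : Fin n) (x : Fin n → EuclideanSpace ℝ (Fin d)) => x i) P :=
          ProbabilityTheory.iIndepFun_pi (X := fun _ => id) (fun _ => aemeasurable_id)
        have h2 := hind.indepFun hij
        have h3 := (ProbabilityTheory.indepFun_iff_map_prod_eq_prod_map_map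
          (measurable_pi_apply i).aemeasurable (measurable_pi_apply j).aemeasurable).1 h2
        have m : ∀ i : Fin n, P.map (fun x => x i) = μ := fun i =>
          (measurePreserving_eval (fun _ : Fin n => μ) i).map_eq
        rw [m, m] at h3
        rw [hJ, ← integral_prod _ hprod, ← h3, integral_map]
        · exact ((measurable_pi_apply i).prodMk (measurable_pi_apply j)).aemeasurable
        · exact Continuous.aestronglyMeasurable (by fun_prop)
    have h0 : 0 ≤ ∫ x, ∑ i, ∑ j, C (x i - x j) ∂P := by
      refine integral_nonneg fun x => ?_
      simpa using hC n x (fun _ => 1)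
    rw [integral_finsetSum _ fun i _ => integrable_finsetSum _ fun j _ => hIntg i j] at h0
    have h4 : ∀ i : Fin n, ∫ x, ∑ j, C (x i - x j) ∂P = C 0 + ((n : ℝ) - 1) * J := by
      intro i
      rw [integral_finsetSum _ fun j _ => hIntg i j]
      simp only [hval]
      have : ∀ j : Fin n, (if i = j then C 0 else J) = (if i = j then C 0 - J else 0) + J := by
        intro j; split_ifs <;> ring
      simp only [this]
      rw [Finset.sum_add_distrib]
      simp
      ring
    simp only [h4] at h0
    simp at h0
    linarith
  by_contra hneg
  push Not at hneg
  obtain ⟨n, hn⟩ := exists_nat_gt ((C 0 - J) / (-J))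
  rw [div_lt_iff₀ (by linarith)] at hn
  have hk := key (n + 1)
  push_cast at hk
  have : (n : ℝ) * J + C 0 < 0 := by linarith
  have hn0 : (0:ℝ) ≤ n := n.cast_nonneg
  nlinarith

lemma psd_gauss {d : ℕ} (C : EuclideanSpace ℝ (Fin d) → ℝ) (hC : IsStationaryCovariance d C)
    (hcont : Continuous C) (B : ℝ) (hB : ∀ h, |C h| ≤ B) (hIntg : Integrable C)
    (t : ℝ) (ht : 0 < t) :
    0 ≤ ∫ h, C h * Real.exp (-(t / 2 * ‖h‖ ^ 2)) := by
  set g : EuclideanSpace ℝ (Fin d) → ℝ := fun x => Real.exp (-(t * ‖x‖ ^ 2)) with hg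
  have hgi : Integrable g := gauss_integrable t ht
  have hgpos : ∀ x, 0 < g x := fun x => Real.exp_pos _
  have hgle : ∀ x, g x ≤ 1 := fun x => by
    simp only [hg, Real.exp_le_one_iff]
    have : 0 ≤ t * ‖x‖ ^ 2 := by positivity
    linarith
  have hgc : Continuous g := by simp only [hg]; fun_prop
  have hZ : 0 < ∫ x, g x := integral_exp_pos hgi
  set Z := ∫ x, g x with hZdef
  set ρ : EuclideanSpace ℝ (Fin d) → ℝ := fun x => Z⁻¹ * g x with hρ
  have hρ0 : ∀ x, 0 ≤ ρ x := fun x => mul_nonneg (inv_nonneg.2 hZ.le) (hgpos x).le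
  have hρc : Continuous ρ := by simp only [hρ]; fun_prop
  set μ := (volume : Measure (EuclideanSpace ℝ (Fin d))).withDensity
    (fun x => ENNReal.ofReal (ρ x)) with hμ
  have hprob : IsProbabilityMeasure μ := by
    constructor
    rw [hμ, withDensity_apply _ MeasurableSet.univ, Measure.restrict_univ,
      ← ofReal_integral_eq_lintegral_ofReal (hgi.const_mul _) (ae_of_all _ hρ0)]
    rw [integral_const_mul, inv_mul_cancel₀ hZ.ne', ENNReal.ofReal_one]
  have hμint : ∀ f : EuclideanSpace ℝ (Fin d) → ℝ, ∫ x, f x ∂μ = ∫ x, ρ x * f x := by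
    intro f
    rw [hμ, integral_withDensity_eq_integral_toReal_smul (by fun_prop)
      (ae_of_all _ fun x => ENNReal.ofReal_lt_top)]
    refine integral_congr_ae (ae_of_all _ fun x => ?_)
    simp [ENNReal.toReal_ofReal (hρ0 x)]
  have h0 := psd_prob C hC hcont B hB μ
  simp only [hμint] at h0
  have e1 : ∀ x, ρ x * ∫ y, ρ y * C (x - y) = Z⁻¹ ^ 2 * ∫ h, g x * g (x - h) * C h := by
    intro x
    rw [← integral_sub_left_eq_self (fun y => ρ y * C (x - y)) volume x,
      ← integral_const_mul, ← integral_const_mul]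
    refine integral_congr_ae (ae_of_all _ fun h => ?_)
    simp only [hρ, sub_sub_cancel]; ring
  simp only [e1] at h0
  rw [integral_const_mul] at h0
  have h1 : 0 ≤ ∫ x, ∫ h, g x * g (x - h) * C h :=
    nonneg_of_mul_nonneg_right h0 (by positivity)
  have hpi : Integrable (fun p : EuclideanSpace ℝ (Fin d) × EuclideanSpace ℝ (Fin d) =>
      g p.1 * g (p.1 - p.2) * C p.2) (volume.prod volume) := by
    have h2 := (hgi.mul_prod hIntg).bdd_mul (c := 1) 
      (f := fun p : EuclideanSpace ℝ (Fin d) × EuclideanSpace ℝ (Fin d) => g (p.1 - p.2))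
      (Continuous.aestronglyMeasurable (by fun_prop))
      (ae_of_all _ fun p => by
        rw [Real.norm_eq_abs, abs_of_pos (hgpos _)]; exact hgle _)
    refine h2.congr (ae_of_all _ fun p => ?_)
    simp only []; ring
  rw [integral_integral_swap hpi] at h1
  set L := ∫ x : EuclideanSpace ℝ (Fin d), Real.exp (-(2 * t * ‖x‖ ^ 2)) with hL
  have hLpos : 0 < L := integral_exp_pos (gauss_integrable (2 * t) (by positivity))
  have e2 : ∀ h, ∫ x, g x * g (x - h) * C h
      = L * (C h * Real.exp (-(t / 2 * ‖h‖ ^ 2))) := by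
    intro h
    rw [integral_mul_const, hL,
      ← integral_sub_right_eq_self (fun x => Real.exp (-(2 * t * ‖x‖ ^ 2))) ((1/2 : ℝ) • h)]
    have : ∀ x, g x * g (x - h) = Real.exp (-(t / 2 * ‖h‖ ^ 2)) *
        Real.exp (-(2 * t * ‖x - (1/2 : ℝ) • h‖ ^ 2)) := by
      intro x
      simp only [hg, ← Real.exp_add]
      congr 1
      rw [norm_sub_sq_real, norm_sub_sq_real, inner_smul_right, norm_smul]
      norm_num
      ring
    simp only [this]
    rw [integral_const_mul]; ring
  simp only [e2] at h1
  rw [integral_const_mul] at h1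
  exact nonneg_of_mul_nonneg_right h1 hLpos

lemma psd_integral {d : ℕ} (C : EuclideanSpace ℝ (Fin d) → ℝ) (hC : IsStationaryCovariance d C)
    (hcont : Continuous C) (B : ℝ) (hB : ∀ h, |C h| ≤ B) (hIntg : Integrable C) :
    0 ≤ ∫ h, C h := by
  have hlim : Filter.Tendsto (fun n : ℕ => ∫ h, C h * Real.exp (-(1 / ((n : ℝ) + 1) / 2 * ‖h‖ ^ 2)))
      Filter.atTop (nhds (∫ h, C h)) := by
    refine tendsto_integral_of_dominated_convergence (fun h => |C h|) ?_ hIntg.abs ?_ ?_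
    · intro n
      exact Continuous.aestronglyMeasurable (by fun_prop)
    · intro n
      refine ae_of_all _ fun h => ?_
      rw [norm_mul, Real.norm_eq_abs, Real.norm_eq_abs, Real.abs_exp]
      refine mul_le_of_le_one_right (abs_nonneg _) (Real.exp_le_one_iff.2 ?_)
      have : 0 ≤ 1 / ((n : ℝ) + 1) / 2 * ‖h‖ ^ 2 := by positivity
      linarith
    · refine ae_of_all _ fun h => ?_
      have h1 := tendsto_one_div_add_atTop_nhds_zero_nat (𝕜 := ℝ)
      have hc : Continuous (fun s : ℝ => C h * Real.exp (-(s / 2 * ‖h‖ ^ 2))) := by fun_prop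
      have h2 := (hc.tendsto 0).comp h1
      simpa [Function.comp_def] using h2
  refine ge_of_tendsto' hlim fun n => ?_
  exact psd_gauss C hC hcont B hB hIntg _ (by positivity)

lemma exp_norm_integrable {d : ℕ} :
    Integrable (fun x : EuclideanSpace ℝ (Fin d) => Real.exp (-‖x‖)) := by
  have h := integrable_one_add_norm (E := EuclideanSpace ℝ (Fin d)) (μ := volume)
    (r := (d : ℝ) + 1) (by simp)
  refine (h.const_mul (((d + 1).factorial : ℝ) * Real.exp 1)).mono'
    (Continuous.aestronglyMeasurable (by fun_prop)) (ae_of_all _ fun x => ?_)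
  rw [Real.norm_eq_abs, Real.abs_exp]
  have hp : 0 < 1 + ‖x‖ := by positivity
  have h1 := Real.pow_div_factorial_le_exp (1 + ‖x‖) hp.le (d + 1)
  rw [Real.rpow_neg hp.le]
  rw [show ((d : ℝ) + 1) = ((d + 1 : ℕ) : ℝ) by push_cast; ring, Real.rpow_natCast]
  rw [div_le_iff₀ (by positivity)] at h1
  rw [← div_eq_mul_inv, le_div_iff₀ (by positivity)]
  calc Real.exp (-‖x‖) * (1 + ‖x‖) ^ (d + 1)
      ≤ Real.exp (-‖x‖) * (Real.exp (1 + ‖x‖) * ((d + 1).factorial : ℝ)) := by gcongr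
    _ = _ := by
      rw [← mul_assoc, ← Real.exp_add, mul_comm]
      congr 2; ring

lemma nec_part {d : ℕ}
    (T₁ T₂ : EuclideanSpace ℝ (Fin d) ≃L[ℝ] EuclideanSpace ℝ (Fin d)) (b₁ b₂ : ℝ)
    (hC : IsStationaryCovariance d (fun h => b₁ * Real.exp (-‖T₁ h‖) - b₂ * Real.exp (-‖T₂ h‖))) :
    b₂ * |LinearMap.det (T₂ : EuclideanSpace ℝ (Fin d) →ₗ[ℝ] EuclideanSpace ℝ (Fin d))|⁻¹ ≤
      b₁ * |LinearMap.det (T₁ : EuclideanSpace ℝ (Fin d) →ₗ[ℝ] EuclideanSpace ℝ (Fin d))|⁻¹ := by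
  have i1 := (integrable_comp_lin T₁ _ (exp_norm_integrable (d := d))).const_mul b₁
  have i2 := (integrable_comp_lin T₂ _ (exp_norm_integrable (d := d))).const_mul b₂
  have h := psd_integral _ hC (by fun_prop) (|b₁| + |b₂|) (fun h => by
    refine (abs_sub _ _).trans ?_
    rw [abs_mul, abs_mul, Real.abs_exp, Real.abs_exp]
    have e1 : Real.exp (-‖T₁ h‖) ≤ 1 := Real.exp_le_one_iff.2 (by simp)
    have e2 : Real.exp (-‖T₂ h‖) ≤ 1 := Real.exp_le_one_iff.2 (by simp)
    exact add_le_add (mul_le_of_le_one_right (abs_nonneg _) e1)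
      (mul_le_of_le_one_right (abs_nonneg _) e2)) (i1.sub i2)
  rw [integral_sub i1 i2, integral_const_mul, integral_const_mul,
    integral_comp_lin T₁ (fun x => Real.exp (-‖x‖)),
    integral_comp_lin T₂ (fun x => Real.exp (-‖x‖))] at h
  have hK : 0 < ∫ x : EuclideanSpace ℝ (Fin d), Real.exp (-‖x‖) :=
    integral_exp_pos exp_norm_integrable
  refine le_of_mul_le_mul_right ?_ hK
  linarith

theorem statement_19 (d : ℕ) (hd : 1 ≤ d)
    (A₁ A₂ : Matrix (Fin d) (Fin d) ℝ) (hA₁ : A₁.PosDef) (hA₂ : A₂.PosDef)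
    (hA₁₂ : (A₁ - A₂).PosSemidef)
    (b₁ b₂ : ℝ) (hb₁ : 0 ≤ b₁) (hb₂ : 0 ≤ b₂) :
    IsStationaryCovariance d
      (fun h => b₁ * Real.exp (-Real.sqrt (quadForm A₁ h)) -
        b₂ * Real.exp (-Real.sqrt (quadForm A₂ h))) ↔
    b₂ * Real.sqrt (A₁.det / A₂.det) ≤ b₁ := by
  obtain ⟨T₁, S₁, hT₁, hTS₁, hdT₁, hdS₁⟩ := exists_factor A₁ hA₁
  obtain ⟨T₂, S₂, hT₂, hTS₂, hdT₂, hdS₂⟩ := exists_factor A₂ hA₂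
  have hs1 : ∀ h, Real.sqrt (quadForm A₁ h) = ‖T₁ h‖ := fun h => by
    rw [← hT₁, Real.sqrt_sq (norm_nonneg _)]
  have hs2 : ∀ h, Real.sqrt (quadForm A₂ h) = ‖T₂ h‖ := fun h => by
    rw [← hT₂, Real.sqrt_sq (norm_nonneg _)]
  simp only [hs1, hs2]
  have hle : ∀ h, ‖T₂ h‖ ≤ ‖T₁ h‖ := fun h => by
    rw [← hs1, ← hs2]
    apply Real.sqrt_le_sqrt
    have h0 := hA₁₂.dotProduct_mulVec_nonneg (h : Fin d → ℝ)
    have e : star (h : Fin d → ℝ) ⬝ᵥ ((A₁ - A₂).mulVec h) = quadForm A₁ h - quadForm A₂ h := by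
      simp only [quadForm, dotProduct, Matrix.mulVec, Finset.mul_sum, ← Finset.sum_sub_distrib]
      refine Finset.sum_congr rfl fun i _ => Finset.sum_congr rfl fun j _ => ?_
      simp; ring
    rw [e] at h0
    linarith
  have p1 : 0 < Real.sqrt A₁.det := Real.sqrt_pos.2 hA₁.det_pos
  have p2 : 0 < Real.sqrt A₂.det := Real.sqrt_pos.2 hA₂.det_pos
  have hiff : b₂ * Real.sqrt (A₁.det / A₂.det) ≤ b₁ ↔
      b₂ * (Real.sqrt A₂.det)⁻¹ ≤ b₁ * (Real.sqrt A₁.det)⁻¹ := by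
    rw [Real.sqrt_div hA₁.det_pos.le, ← div_eq_mul_inv, ← div_eq_mul_inv, le_div_iff₀ p1]
    rw [show b₂ * (Real.sqrt A₁.det / Real.sqrt A₂.det)
      = b₂ / Real.sqrt A₂.det * Real.sqrt A₁.det by ring]
  rw [hiff]
  constructor
  · intro hC
    have := nec_part T₁ T₂ b₁ b₂ hC
    rwa [hdT₁, hdT₂] at this
  · intro hb
    refine suff_part T₁ S₁ T₂ S₂ hTS₁ hTS₂ hle b₁ b₂ hb₂ ?_
    rwa [hdS₁, hdS₂]
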